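/- Let T > 0, p₀ > 0, and let γ denote the standard Gaussian measure on ℝ (mean 0, variance 1). Let C̄ : ℝ → ℝ be continuous on (0,∞), nonnegative on (0,∞), nondecreasing on (0,∞), concave on (0,∞), strictly concave on some interval (q̲, q̄) with 0 < q̲ < q̄, and satisfy C̄(q) → 0 as q → 0⁺ and C̄(q)/q → 0 as q → ∞. Define G(σ) := ∫ C̄(p₀·exp(−σ²T/2 + σ√T·z)) dγ(z). Then for every π̄ with 0 ≤ π̄ < C̄(p₀) there exists a unique σ ≥ 0 such that C̄(p₀) − G(σ) = π̄. -/

import Mathlib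

open MeasureTheory ProbabilityTheory Filter

/-!
Write `P_v C (x) = E[C(x e^U)]` with `U ∼ N(-v/2, v)`, so that `G(σ) = P_{σ²T} C (p₀)`. It suffices
that `v ↦ P_v C (x)` is a continuous, strictly decreasing function from `C x` to `0`.

* The limits at `0` and `∞` force `|C q| ≤ ε (1 + q) + A √q`. This dominates the integrands, which
  gives continuity in `v`, and since `E √(x e^U) = √x e^{-v/8}` it also gives `P_v C (x) → 0`.
* The family `P_v` is a semigroup and each `x e^U` has mean `x`, so Jensen's inequality makes
  `P_v C (x)` decrease in `v`. Equality would make `C` coincide with its supporting line at some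
  point, because `U` has full support; but an affine function with the limits above is zero.
-/

section

open scoped NNReal Topology

lemma integral_lt_integral_of_forall_lt {Ω : Type*} [MeasurableSpace Ω] {μ : Measure Ω} [NeZero μ]
    {f g : Ω → ℝ} (hf : Integrable f μ) (hg : Integrable g μ) (hfg : ∀ ω, f ω < g ω) :
    ∫ ω, f ω ∂μ < ∫ ω, g ω ∂μ := by
  have hpos : 0 < ∫ ω, (g ω - f ω) ∂μ := by
    rw [integral_pos_iff_support_of_nonneg (fun ω ↦ sub_nonneg.2 (hfg ω).le) (hg.sub hf),
      Function.support_eq_univ fun ω ↦ sub_ne_zero.2 (hfg ω).ne']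
    exact NeZero.pos _
  rwa [integral_sub hg hf, sub_pos] at hpos

lemma integrable_integral_of_integrable_conv {M E : Type*} [AddMonoid M] [MeasurableSpace M]
    [MeasurableAdd₂ M] [NormedAddCommGroup E] [NormedSpace ℝ E] {μ ν : Measure M} [SFinite μ]
    [SFinite ν] {f : M → E} (hf : Integrable f (μ ∗ ν)) :
    Integrable (fun a ↦ ∫ b, f (a + b) ∂ν) μ :=
  ((integrable_map_measure hf.1 (by fun_prop)).1 hf).integral_prod_left

lemma isOpenPosMeasure_gaussianReal (m : ℝ) {v : ℝ≥0} (hv : v ≠ 0) :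
    (gaussianReal m v).IsOpenPosMeasure :=
  (gaussianReal_absolutelyContinuous' m hv).isOpenPosMeasure

lemma concaveOn_exists_supporting_line {s : Set ℝ} {f : ℝ → ℝ} {x : ℝ} (hf : ConcaveOn ℝ s f)
    (hx : x ∈ interior s) : ∃ m : ℝ, ∀ y ∈ s, f y ≤ f x + m * (y - x) := by
  refine ⟨-derivWithin (-f) (Set.Ioi x) x, fun y hy ↦ ?_⟩
  rcases lt_trichotomy y x with hyx | rfl | hxy
  · have hslope := (hf.neg.slope_le_leftDeriv_of_mem_interior hy hx hyx).trans
      (hf.neg.leftDeriv_le_rightDeriv_of_mem_interior hx)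
    rw [slope_def_field, div_le_iff₀ (sub_pos.2 hyx), Pi.neg_apply, Pi.neg_apply] at hslope
    linarith
  · simp
  · have hslope := hf.neg.rightDeriv_le_slope_of_mem_interior hx hy hxy
    rw [slope_def_field, le_div_iff₀ (sub_pos.2 hxy), Pi.neg_apply, Pi.neg_apply] at hslope
    linarith

lemma concaveOn_integral_comp_lt {Ω : Type*} [TopologicalSpace Ω] [MeasurableSpace Ω]
    {μ : Measure Ω} [IsProbabilityMeasure μ] [μ.IsOpenPosMeasure] {s : Set ℝ} {f : ℝ → ℝ}
    {X : Ω → ℝ} (hf : ConcaveOn ℝ s f) (hs : IsOpen s) (hX : Continuous X)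
    (hrange : Set.range X = s) (hXint : Integrable X μ) (hfX : Integrable (fun ω ↦ f (X ω)) μ)
    (hmean : ∫ ω, X ω ∂μ ∈ s) (haff : ¬∃ a b : ℝ, ∀ q ∈ s, f q = a + b * q) :
    ∫ ω, f (X ω) ∂μ < f (∫ ω, X ω ∂μ) := by
  set x := ∫ ω, X ω ∂μ with hx
  have hXs : ∀ ω, X ω ∈ s := fun ω ↦ hrange ▸ Set.mem_range_self ω
  obtain ⟨m, hline⟩ := concaveOn_exists_supporting_line hf (hs.interior_eq.symm ▸ hmean)
  obtain ⟨ω₀, hω₀⟩ : ∃ ω, f (X ω) ≠ f x + m * (X ω - x) := by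
    by_contra! heq
    refine haff ⟨f x - m * x, m, fun q hq ↦ ?_⟩
    obtain ⟨ω, rfl⟩ := hrange.symm ▸ hq
    rw [heq ω]
    ring
  have hfXcont : Continuous fun ω ↦ f (X ω) := (hf.continuousOn hs).comp_continuous hX hXs
  have hdevint : Integrable (fun ω ↦ m * (X ω - x)) μ :=
    (hXint.sub (integrable_const x)).const_mul m
  have hlineint : Integrable (fun ω ↦ f x + m * (X ω - x)) μ := (integrable_const _).add hdevint
  have hgap : 0 < ∫ ω, (f x + m * (X ω - x) - f (X ω)) ∂μ :=
    integral_pos_of_integrable_nonneg_nonzero (.sub (by fun_prop) hfXcont) (hlineint.sub hfX)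
      (fun ω ↦ sub_nonneg.2 (hline _ (hXs ω))) (sub_ne_zero.2 hω₀.symm)
  have hlineval : ∫ ω, (f x + m * (X ω - x)) ∂μ = f x := by
    rw [integral_add (integrable_const _) hdevint, integral_const_mul,
      integral_sub hXint (integrable_const x), ← hx]
    simp
  rwa [integral_sub hlineint hfX, hlineval, sub_pos] at hgap

section Growth

variable {C : ℝ → ℝ} (hlim0 : Tendsto C (𝓝[>] 0) (𝓝 0))
  (hliminf : Tendsto (fun q ↦ C q / q) atTop (𝓝 0))
include hlim0 hliminf

lemma exists_abs_le_add_mul_sqrt (hcont : ContinuousOn C (Set.Ioi 0)) {ε : ℝ} (hε : 0 < ε) :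
    ∃ A : ℝ, ∀ q, 0 < q → |C q| ≤ ε * (1 + q) + A * √q := by
  obtain ⟨δ, hδ, hsmall⟩ : ∃ δ > 0, ∀ q ∈ Set.Ioo 0 δ, |C q| < ε :=
    mem_nhdsGT_iff_exists_Ioo_subset.1 <| hlim0.abs.eventually_lt_const (by simpa using hε)
  obtain ⟨Q, hlarge⟩ : ∃ Q, ∀ q ≥ Q, |C q / q| < ε :=
    eventually_atTop.1 <| hliminf.abs.eventually_lt_const (by simpa using hε)
  obtain ⟨M, hM⟩ := isCompact_Icc.exists_bound_of_continuousOn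
    (hcont.mono fun q (hq : q ∈ Set.Icc δ Q) ↦ hδ.trans_le hq.1)
  refine ⟨max M 0 / √δ, fun q hq ↦ ?_⟩
  have hεq : 0 < ε * q := mul_pos hε hq
  have hA : 0 ≤ max M 0 / √δ * √q := by positivity
  rcases lt_or_ge q δ with hqδ | hδq
  · linarith [hsmall q ⟨hq, hqδ⟩]
  rcases le_total Q q with hQq | hqQ
  · have hratio := hlarge q hQq
    rw [abs_div, abs_of_pos hq, div_lt_iff₀ hq] at hratio
    linarith
  · calc |C q| ≤ max M 0 := (hM q ⟨hδq, hqQ⟩).trans (le_max_left _ _)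
      _ ≤ max M 0 / √δ * √q := by
        rw [div_mul_eq_mul_div, le_div_iff₀ (Real.sqrt_pos.2 hδ)]
        gcongr
      _ ≤ ε * (1 + q) + max M 0 / √δ * √q := le_add_of_nonneg_left (by positivity)

lemma exists_abs_le_mul_one_add (hcont : ContinuousOn C (Set.Ioi 0)) :
    ∃ K : ℝ, ∀ q, 0 < q → |C q| ≤ K * (1 + q) := by
  obtain ⟨A, hA⟩ := exists_abs_le_add_mul_sqrt hlim0 hliminf hcont one_pos
  refine ⟨1 + |A|, fun q hq ↦ ?_⟩
  have hsqrt : √q ≤ 1 + q := by nlinarith [Real.sq_sqrt hq.le, sq_nonneg (√q - 1)]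
  calc |C q| ≤ 1 * (1 + q) + A * √q := hA q hq
    _ ≤ 1 * (1 + q) + |A| * (1 + q) := by gcongr; exact le_abs_self A
    _ = (1 + |A|) * (1 + q) := by ring

lemma eq_zero_of_eq_affine {a b : ℝ} (hC : ∀ q ∈ Set.Ioi 0, C q = a + b * q) :
    ∀ q ∈ Set.Ioi 0, C q = 0 := by
  have ha : a = 0 := by
    have hlim : Tendsto (fun q : ℝ ↦ a + b * q) (𝓝[>] 0) (𝓝 (a + b * 0)) :=
      (Continuous.tendsto (by fun_prop) 0).mono_left nhdsWithin_le_nhds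
    simpa using tendsto_nhds_unique
      (hlim.congr' <| eventually_nhdsWithin_of_forall fun q hq ↦ (hC q hq).symm) hlim0
  have hb : b = 0 := by
    refine tendsto_nhds_unique (tendsto_const_nhds.congr' ?_) hliminf
    filter_upwards [eventually_gt_atTop 0] with q hq
    rw [hC q hq, ha, zero_add, mul_div_cancel_right₀ b hq.ne']
  simpa only [ha, hb, zero_mul, add_zero] using hC

end Growth

/-- The risk-neutral law of the logarithm of the discounted gross return, for total variance
`v = σ²T`; the mean `-v/2` makes the discounted price a martingale. -/
noncomputable abbrev logReturnLaw (v : ℝ≥0) : Measure ℝ := gaussianReal (-(v / 2)) v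

lemma logReturnLaw_conv (v w : ℝ≥0) :
    logReturnLaw v ∗ logReturnLaw w = logReturnLaw (v + w) := by
  rw [gaussianReal_conv_gaussianReal, logReturnLaw, NNReal.coe_add, add_div, neg_add]

lemma integrable_exp_logReturnLaw (v : ℝ≥0) : Integrable Real.exp (logReturnLaw v) := by
  simpa only [one_mul] using integrable_exp_mul_gaussianReal (μ := -(v / 2)) (v := v) 1

/-- The risk-neutral expectation of the payoff `C` of a discounted price with initial value `x` and
total variance `v = σ²T`. -/
noncomputable def lognormalMean (C : ℝ → ℝ) (x : ℝ) (v : ℝ≥0) : ℝ :=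
  ∫ u, C (x * Real.exp u) ∂logReturnLaw v

lemma integrable_mul_exp_rpow {x : ℝ} (hx : 0 ≤ x) (p : ℝ) (v : ℝ≥0) :
    Integrable (fun u ↦ (x * Real.exp u) ^ p) (logReturnLaw v) := by
  simpa only [Real.mul_rpow hx (Real.exp_pos _).le, ← Real.exp_mul, mul_comm _ p] using
    (integrable_exp_mul_gaussianReal p).const_mul (x ^ p)

lemma lognormalMean_zero (C : ℝ → ℝ) (x : ℝ) : lognormalMean C x 0 = C x := by
  simp [lognormalMean, logReturnLaw]

lemma lognormalMean_rpow {x : ℝ} (hx : 0 ≤ x) (p : ℝ) (v : ℝ≥0) :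
    lognormalMean (· ^ p) x v = x ^ p * Real.exp (p * (p - 1) / 2 * v) := by
  have hmgf : ∫ u, Real.exp (p * u) ∂logReturnLaw v = Real.exp (-(v / 2) * p + v * p ^ 2 / 2) :=
    congrFun mgf_fun_id_gaussianReal p
  simp only [lognormalMean, Real.mul_rpow hx (Real.exp_pos _).le, ← Real.exp_mul, mul_comm _ p,
    integral_const_mul, hmgf]
  ring_nf

lemma lognormalMean_id {x : ℝ} (hx : 0 ≤ x) (v : ℝ≥0) : lognormalMean id x v = x := by
  simpa [lognormalMean] using lognormalMean_rpow hx 1 v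

lemma lognormalMean_sqrt {x : ℝ} (hx : 0 ≤ x) (v : ℝ≥0) :
    lognormalMean Real.sqrt x v = √x * Real.exp (-(v / 8)) := by
  have h := lognormalMean_rpow hx (1 / 2) v
  simp only [← Real.sqrt_eq_rpow] at h
  rw [h]
  ring_nf

lemma abs_lognormalMean_le {C : ℝ → ℝ} {ε A x : ℝ}
    (hC : ∀ q, 0 < q → |C q| ≤ ε * (1 + q) + A * √q) (hx : 0 < x) (v : ℝ≥0) :
    |lognormalMean C x v| ≤ ε * (1 + x) + A * (√x * Real.exp (-(v / 8))) := by
  have hid : Integrable (fun u ↦ id (x * Real.exp u)) (logReturnLaw v) :=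
    (integrable_exp_logReturnLaw v).const_mul x
  have hlin : Integrable (fun u ↦ ε * (1 + id (x * Real.exp u))) (logReturnLaw v) :=
    ((integrable_const 1).add hid).const_mul ε
  have hsqrt : Integrable (fun u ↦ √(x * Real.exp u)) (logReturnLaw v) := by
    simpa only [Real.sqrt_eq_rpow] using integrable_mul_exp_rpow hx.le (1 / 2) v
  have hbound : Integrable (fun u ↦ ε * (1 + id (x * Real.exp u)) + A * √(x * Real.exp u))
      (logReturnLaw v) := hlin.add (hsqrt.const_mul A)
  calc |lognormalMean C x v|
      ≤ ∫ u, (ε * (1 + id (x * Real.exp u)) + A * √(x * Real.exp u)) ∂logReturnLaw v := by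
        rw [lognormalMean, ← Real.norm_eq_abs]
        exact norm_integral_le_of_norm_le hbound
          (ae_of_all _ fun _ ↦ hC _ (mul_pos hx (Real.exp_pos _)))
    _ = ε * (1 + lognormalMean id x v) + A * lognormalMean Real.sqrt x v := by
        rw [integral_add hlin (hsqrt.const_mul A), integral_const_mul, integral_const_mul,
          integral_add (integrable_const 1) hid]
        simp [lognormalMean]
    _ = ε * (1 + x) + A * (√x * Real.exp (-(v / 8))) := by
        rw [lognormalMean_id hx.le, lognormalMean_sqrt hx.le]

section Payoff

variable {C : ℝ → ℝ} (hcont : ContinuousOn C (Set.Ioi 0)) {x : ℝ} (hx : 0 < x)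
include hcont hx

lemma continuous_comp_mul_exp : Continuous fun u : ℝ ↦ C (x * Real.exp u) :=
  hcont.comp_continuous (by fun_prop) fun _ ↦ mul_pos hx (Real.exp_pos _)

lemma lognormalMean_eq_integral_stdGaussian {v : ℝ≥0} {s : ℝ} (hs : s ^ 2 = v) :
    lognormalMean C x v = ∫ z, C (x * Real.exp (-(v / 2) + s * z)) ∂gaussianReal 0 1 := by
  have hlaw : (gaussianReal 0 1).map (fun z ↦ -(v / 2 : ℝ) + s * z) = logReturnLaw v := by
    have hvar : NNReal.mk (s ^ 2) (sq_nonneg s) = v := NNReal.eq hs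
    rw [← Function.comp_def (-(v / 2 : ℝ) + ·) (s * ·), ← Measure.map_map (by fun_prop)
      (by fun_prop), gaussianReal_map_const_mul, gaussianReal_map_const_add, hvar, mul_zero,
      zero_add, mul_one]
  rw [lognormalMean, ← hlaw, integral_map (by fun_prop)
    (continuous_comp_mul_exp hcont hx).aestronglyMeasurable]

section LinearGrowth

variable {K : ℝ} (hK : ∀ q, 0 < q → |C q| ≤ K * (1 + q))
include hK

lemma integrable_comp_mul_exp {μ : Measure ℝ} [IsFiniteMeasure μ] (hexp : Integrable Real.exp μ) :
    Integrable (fun u ↦ C (x * Real.exp u)) μ :=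
  (((integrable_const 1).add (hexp.const_mul x)).const_mul K).mono'
    (continuous_comp_mul_exp hcont hx).aestronglyMeasurable
    (ae_of_all _ fun _ ↦ hK _ (mul_pos hx (Real.exp_pos _)))

lemma continuous_lognormalMean : Continuous (lognormalMean C x) := by
  have hstd : lognormalMean C x =
      fun v : ℝ≥0 ↦ ∫ z, C (x * Real.exp (-(v / 2) + √v * z)) ∂gaussianReal 0 1 :=
    funext fun v ↦ lognormalMean_eq_integral_stdGaussian hcont hx (Real.sq_sqrt v.coe_nonneg)
  have hKnn : 0 ≤ K :=
    nonneg_of_mul_nonneg_left ((abs_nonneg _).trans (hK x hx)) (by positivity)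
  rw [hstd, continuous_iff_continuousAt]
  intro v₀
  set s := √(v₀ + 1 : ℝ)
  have hbound : ∀ᶠ v : ℝ≥0 in 𝓝 v₀, ∀ z : ℝ,
      ‖C (x * Real.exp (-(v / 2) + √v * z))‖ ≤ K * (1 + x * Real.exp (s * |z|)) := by
    filter_upwards [gt_mem_nhds (lt_add_one v₀)] with v hv z
    refine (hK _ (mul_pos hx (Real.exp_pos _))).trans ?_
    have hvs : √(v : ℝ) ≤ s := Real.sqrt_le_sqrt (mod_cast hv.le)
    have hexponent : -(v / 2 : ℝ) + √v * z ≤ s * |z| :=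
      calc -(v / 2 : ℝ) + √v * z ≤ √v * z := add_le_of_nonpos_left (neg_nonpos.2 (by positivity))
        _ ≤ √v * |z| := by gcongr; exact le_abs_self z
        _ ≤ s * |z| := by gcongr
    gcongr
  refine continuousAt_of_dominated (bound := fun z ↦ K * (1 + x * Real.exp (s * |z|)))
    (Eventually.of_forall fun v ↦
      ((continuous_comp_mul_exp hcont hx).comp (by fun_prop)).aestronglyMeasurable)
    (hbound.mono fun v hv ↦ ae_of_all _ hv) ?_ (ae_of_all _ fun z ↦
      ((continuous_comp_mul_exp hcont hx).comp (by fun_prop)).continuousAt)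
  exact ((integrable_const 1).add ((integrable_exp_mul_abs (integrable_exp_mul_gaussianReal s)
    (integrable_exp_mul_gaussianReal (-s))).const_mul x)).const_mul K

lemma integrable_comp_mul_exp_conv (v w : ℝ≥0) :
    Integrable (fun u ↦ C (x * Real.exp u)) (logReturnLaw v ∗ logReturnLaw w) := by
  rw [logReturnLaw_conv]
  exact integrable_comp_mul_exp hcont hx hK (integrable_exp_logReturnLaw _)

lemma integrable_lognormalMean_mul_exp (v w : ℝ≥0) :
    Integrable (fun u ↦ lognormalMean C (x * Real.exp u) w) (logReturnLaw v) := by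
  simpa only [lognormalMean, Real.exp_add, mul_assoc] using
    integrable_integral_of_integrable_conv (integrable_comp_mul_exp_conv hcont hx hK v w)

lemma lognormalMean_add (v w : ℝ≥0) :
    lognormalMean C x (v + w) = lognormalMean (fun y ↦ lognormalMean C y w) x v := by
  rw [lognormalMean, ← logReturnLaw_conv,
    integral_conv (integrable_comp_mul_exp_conv hcont hx hK v w)]
  simp only [lognormalMean, Real.exp_add, mul_assoc]

end LinearGrowth

lemma tendsto_lognormalMean_atTop (hlim0 : Tendsto C (𝓝[>] 0) (𝓝 0))
    (hliminf : Tendsto (fun q ↦ C q / q) atTop (𝓝 0)) :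
    Tendsto (lognormalMean C x) atTop (𝓝 0) := by
  rw [Metric.tendsto_nhds]
  intro η hη
  set ε := η / (2 * (1 + x)) with hε
  obtain ⟨A, hA⟩ := exists_abs_le_add_mul_sqrt hlim0 hliminf hcont (ε := ε) (by positivity)
  have hlim : Tendsto (fun v : ℝ≥0 ↦ ε * (1 + x) + A * (√x * Real.exp (-(v / 8)))) atTop
      (𝓝 (ε * (1 + x) + A * (√x * 0))) := by
    refine (((Real.tendsto_exp_neg_atTop_nhds_zero.comp ?_).const_mul _).const_mul _).const_add _
    exact NNReal.tendsto_coe_atTop.2 tendsto_id |>.atTop_div_const (by norm_num)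
  have hlt : ε * (1 + x) + A * (√x * 0) < η := by
    rw [mul_zero, mul_zero, add_zero, hε]
    field_simp
    norm_num
  filter_upwards [hlim.eventually_lt_const hlt] with v hv
  rw [Real.dist_0_eq_abs]
  exact (abs_lognormalMean_le hA hx v).trans_lt hv

end Payoff

section ConcavePayoff

variable {C : ℝ → ℝ} (hconc : ConcaveOn ℝ (Set.Ioi 0) C)
include hconc

lemma lognormalMean_lt_self {K x : ℝ} (hK : ∀ q, 0 < q → |C q| ≤ K * (1 + q))
    (haff : ¬∃ a b : ℝ, ∀ q ∈ Set.Ioi 0, C q = a + b * q) (hx : 0 < x) {v : ℝ≥0} (hv : v ≠ 0) :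
    lognormalMean C x v < C x := by
  have := isOpenPosMeasure_gaussianReal (-(v / 2)) hv
  have hmean : ∫ u, x * Real.exp u ∂logReturnLaw v = x := lognormalMean_id hx.le v
  have hrange : Set.range (fun u ↦ x * Real.exp u) = Set.Ioi 0 := by
    ext q
    refine ⟨?_, fun hq ↦ ⟨Real.log (q / x), ?_⟩⟩
    · rintro ⟨u, rfl⟩
      exact mul_pos hx (Real.exp_pos u)
    · simp only [Real.exp_log (div_pos hq hx), mul_div_cancel₀ q hx.ne']
  have hexp := integrable_exp_logReturnLaw v
  have hlt := concaveOn_integral_comp_lt hconc isOpen_Ioi (by fun_prop) hrange (hexp.const_mul x)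
    (integrable_comp_mul_exp (hconc.continuousOn isOpen_Ioi) hx hK hexp) (hmean.symm ▸ hx) haff
  rwa [hmean] at hlt

lemma strictAnti_lognormalMean {K x : ℝ} (hK : ∀ q, 0 < q → |C q| ≤ K * (1 + q))
    (haff : ¬∃ a b : ℝ, ∀ q ∈ Set.Ioi 0, C q = a + b * q) (hx : 0 < x) :
    StrictAnti (lognormalMean C x) := by
  intro v t hvt
  obtain ⟨w, rfl⟩ := exists_add_of_le hvt.le
  have hw : w ≠ 0 := by
    rintro rfl
    simp at hvt
  have hcont := hconc.continuousOn isOpen_Ioi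
  rw [lognormalMean_add hcont hx hK]
  exact integral_lt_integral_of_forall_lt (integrable_lognormalMean_mul_exp hcont hx hK v w)
    (integrable_comp_mul_exp hcont hx hK (integrable_exp_logReturnLaw v))
    fun u ↦ lognormalMean_lt_self hconc hK haff (mul_pos hx (Real.exp_pos u)) hw

lemma existsUnique_lognormalMean_eq (hlim0 : Tendsto C (𝓝[>] 0) (𝓝 0))
    (hliminf : Tendsto (fun q ↦ C q / q) atTop (𝓝 0)) {x y : ℝ} (hx : 0 < x) (hy : 0 < y)
    (hyC : y ≤ C x) : ∃! v : ℝ≥0, lognormalMean C x v = y := by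
  have hcont := hconc.continuousOn isOpen_Ioi
  obtain ⟨K, hK⟩ := exists_abs_le_mul_one_add hlim0 hliminf hcont
  have haff : ¬∃ a b : ℝ, ∀ q ∈ Set.Ioi 0, C q = a + b * q := fun ⟨_, _, hab⟩ ↦
    (hy.trans_le hyC).ne' (eq_zero_of_eq_affine hlim0 hliminf hab x hx)
  have hsmall : ∃ v, lognormalMean C x v ≤ y :=
    ((tendsto_lognormalMean_atTop hcont hx hlim0 hliminf).eventually_le_const hy).exists
  obtain ⟨v, hv⟩ := mem_range_of_exists_le_of_exists_ge (continuous_lognormalMean hcont hx hK)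
    hsmall ⟨0, by rwa [lognormalMean_zero]⟩
  exact ⟨v, hv, fun w hw ↦ (strictAnti_lognormalMean hconc hK haff hx).injective (hw.trans hv.symm)⟩

end ConcavePayoff

end

theorem implied_volatility_bijection_general (T p₀ : ℝ) (hT : 0 < T) (hp₀ : 0 < p₀)
    (C : ℝ → ℝ) (hconc : ConcaveOn ℝ (Set.Ioi (0 : ℝ)) C)
    (hlim0 : Tendsto C (nhdsWithin 0 (Set.Ioi (0 : ℝ))) (nhds 0))
    (hliminf : Tendsto (fun q => C q / q) atTop (nhds 0)) :
    let G : ℝ → ℝ := fun σ =>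
      ∫ z, C (p₀ * Real.exp (-σ ^ 2 * T / 2 + σ * Real.sqrt T * z))
        ∂(gaussianReal 0 1)
    ∀ π : ℝ, 0 ≤ π → π < C p₀ →
      ∃! σ : ℝ, 0 ≤ σ ∧ C p₀ - G σ = π := by
  intro G π hπ0 hπ
  have hG (σ : ℝ) : G σ = lognormalMean C p₀ (σ ^ 2 * T).toNNReal := by
    have hvar : ((σ ^ 2 * T).toNNReal : ℝ) = σ ^ 2 * T := Real.coe_toNNReal _ (by positivity)
    rw [lognormalMean_eq_integral_stdGaussian (hconc.continuousOn isOpen_Ioi) hp₀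
      (s := σ * √T) (by rw [hvar, mul_pow, Real.sq_sqrt hT.le]), hvar]
    simp only [G, neg_mul, neg_div]
  obtain ⟨v, hv, hv_unique⟩ := existsUnique_lognormalMean_eq hconc hlim0 hliminf hp₀
    (sub_pos.2 hπ) (sub_le_self _ hπ0)
  refine ⟨√(v / T), ⟨Real.sqrt_nonneg _, ?_⟩, fun τ ⟨hτ0, hτ⟩ ↦ ?_⟩
  · rw [hG, Real.sq_sqrt (by positivity), div_mul_cancel₀ _ hT.ne', Real.toNNReal_coe, hv,
      sub_sub_cancel]
  · have hτv : (τ ^ 2 * T).toNNReal = v := hv_unique _ ((hG τ).symm.trans (by linarith))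
    rw [← hτv, Real.coe_toNNReal _ (by positivity), mul_div_cancel_right₀ _ hT.ne',
      Real.sqrt_sq hτ0]

/-- (Implied volatility bijection.) If `C̄` is continuous, nonnegative,
nondecreasing, concave on `(0,∞)`, strictly concave on some `(q̲, q̄)` with `0 < q̲ < q̄`,
and satisfies `C̄(q) → 0` as `q → 0⁺` and `C̄(q)/q → 0` as `q → ∞`, then for every fixed
leg `π̄ ∈ [0, C̄(p₀))` there is a unique implied volatility `σ ≥ 0` with
`C̄(p₀) − G(σ) = π̄`, where `G(σ) = ∫ C̄(p₀·exp(−σ²T/2 + σ√T·z)) dγ(z)`. -/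
theorem implied_volatility_bijection (T p₀ : ℝ) (hT : 0 < T) (hp₀ : 0 < p₀)
    (C : ℝ → ℝ) (hcont : ContinuousOn C (Set.Ioi (0 : ℝ)))
    (hnn : ∀ q : ℝ, 0 < q → 0 ≤ C q)
    (hmono : MonotoneOn C (Set.Ioi (0 : ℝ)))
    (hconc : ConcaveOn ℝ (Set.Ioi (0 : ℝ)) C)
    (qlo qhi : ℝ) (hqlo : 0 < qlo) (hqs : qlo < qhi)
    (hstrict : StrictConcaveOn ℝ (Set.Ioo qlo qhi) C)
    (hlim0 : Tendsto C (nhdsWithin 0 (Set.Ioi (0 : ℝ))) (nhds 0))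
    (hliminf : Tendsto (fun q => C q / q) atTop (nhds 0)) :
    let G : ℝ → ℝ := fun σ =>
      ∫ z, C (p₀ * Real.exp (-σ ^ 2 * T / 2 + σ * Real.sqrt T * z))
        ∂(gaussianReal 0 1)
    ∀ π : ℝ, 0 ≤ π → π < C p₀ →
      ∃! σ : ℝ, 0 ≤ σ ∧ C p₀ - G σ = π := by
  exact implied_volatility_bijection_general T p₀ hT hp₀ C hconc hlim0 hliminf
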